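/- Let G be a finitely generated infinite group, let L be a finite set, and let G act on L^G by left-shifts: (g·x)(h) = x(g⁻¹h). Let P ⊆ L^G be a finite G-invariant set. For every ε > 0 and every open set U ⊇ P there is a clopen set V with P ⊆ V ⊆ U such that rh_{G,μ}({V}) < ε for every G-invariant Borel probability measure μ on L^G. -/

import Mathlib

open MeasureTheory Set Function
open scoped ENNReal symmDiff

/-- A set in a measurable space is *analytic* if it is the image of a Borel subset of a
standard Borel space under a Borel (measurable) map. -/
def IsAnalyticS {W : Type*} [MeasurableSpace W] (A : Set W) : Prop :=
  ∃ (Z : Type) (mZ : MeasurableSpace Z), @StandardBorelSpace Z mZ ∧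
    ∃ (B : Set Z) (f : Z → W), MeasurableSet[mZ] B ∧ @Measurable Z W mZ _ f ∧ f '' B = A

/-- The smallest `G`-invariant sub-σ-algebra containing the collection `ξ`. -/
def sigmaG (G : Type*) {X : Type*} [Group G] [MulAction G X] (ξ : Set (Set X)) :
    MeasurableSpace X :=
  MeasurableSpace.generateFrom {B | ∃ (g : G), ∃ A ∈ ξ, B = (fun x => g • x) ⁻¹' A}

/-- The σ-algebra of `G`-invariant measurable sets. -/
def invSigma (G X : Type*) [Group G] [MulAction G X] [MeasurableSpace X] :
    MeasurableSpace X :=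
  MeasurableSpace.generateFrom {A | MeasurableSet A ∧ ∀ g : G, (fun x => g • x) ⁻¹' A = A}

/-- Conditional Shannon entropy `H_μ(α | m)` of a countable partition `α` given a
sub-σ-algebra `m`, valued in `[0,∞]`. -/
noncomputable def condEnt {X : Type*} (m : MeasurableSpace X) [mX : MeasurableSpace X]
    (μ : Measure X) {ι : Type*} (α : ι → Set X) : ℝ≥0∞ :=
  ∫⁻ x, ∑' i, ENNReal.ofReal
    (Real.negMulLog ((μ[(α i).indicator (fun _ => (1 : ℝ)) | m]) x)) ∂μ

/-- Shannon entropy `H_μ(α)` of a countable partition. -/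
noncomputable def shEnt {X : Type*} [MeasurableSpace X] (μ : Measure X)
    {ι : Type*} (α : ι → Set X) : ℝ≥0∞ :=
  ∑' i, ENNReal.ofReal (Real.negMulLog (μ (α i)).toReal)

/-- `α` is a countable Borel partition of `X` (indexed by `ℕ`, cells may be empty). -/
def IsPartition {X : Type*} [MeasurableSpace X] (α : ℕ → Set X) : Prop :=
  (∀ i, MeasurableSet (α i)) ∧ Pairwise (Function.onFun Disjoint α) ∧ (⋃ i, α i) = univ

/-- Every set of `ξ` agrees with an `m`-measurable set modulo `μ`-null sets. -/
def SubsetMod {X : Type*} (m : MeasurableSpace X) [mX : MeasurableSpace X] (μ : Measure X)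
    (ξ : Set (Set X)) : Prop :=
  ∀ A ∈ ξ, ∃ B, MeasurableSet[m] B ∧ μ (A ∆ B) = 0

/-- Outer Rokhlin entropy `rh_{G,μ}(ξ | F)`. -/
noncomputable def outerRokhlin (G : Type*) {X : Type*} (ξ : Set (Set X))
    (F : MeasurableSpace X) [Group G] [MulAction G X] [mX : MeasurableSpace X]
    (μ : Measure X) : ℝ≥0∞ :=
  sInf { h | ∃ α : ℕ → Set X, IsPartition α ∧
      SubsetMod (sigmaG G (Set.range α) ⊔ F ⊔ invSigma G X) μ ξ ∧
      h = condEnt (F ⊔ invSigma G X) μ α }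

/-- Rokhlin entropy `rh_G(X, μ | F)`. -/
noncomputable def rokhlin (G : Type*) {X : Type*} (F : MeasurableSpace X) [Group G]
    [MulAction G X] [mX : MeasurableSpace X] (μ : Measure X) : ℝ≥0∞ :=
  outerRokhlin G {A | MeasurableSet A} F μ

/-- Outer Rokhlin entropy `rh_{G,μ}(S | F)` of a sub-σ-algebra `S`. -/
noncomputable def outerRokhlinAlg (G : Type*) {X : Type*} (S F : MeasurableSpace X) [Group G]
    [MulAction G X] [mX : MeasurableSpace X] (μ : Measure X) : ℝ≥0∞ :=
  outerRokhlin G {A | MeasurableSet[S] A} F μ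

/-- The action of `G` on `(X, μ)` is probability-measure-preserving. -/
def IsPmp (G : Type*) {X : Type*} [Group G] [MulAction G X] [MeasurableSpace X]
    (μ : Measure X) : Prop :=
  ∀ g : G, MeasurePreserving (fun x => g • x) μ μ

/-- Aperiodicity: μ-almost-every `G`-orbit is infinite. -/
def Aperiodic (G : Type*) {X : Type*} [Group G] [MulAction G X] [MeasurableSpace X]
    (μ : Measure X) : Prop :=
  ∀ᵐ x ∂μ, (MulAction.orbit G x).Infinite

/-- Ergodicity of a measure: every invariant Borel set is null or conull. -/
def IsErgodicInv (G : Type*) {X : Type*} [Group G] [MulAction G X] [MeasurableSpace X]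
    (ν : Measure X) : Prop :=
  ∀ A : Set X, MeasurableSet A → (∀ g : G, (fun x => g • x) ⁻¹' A = A) → ν A = 0 ∨ ν A = 1

/-- `F` is a `G`-invariant σ-algebra. -/
def InvariantAlg (G : Type*) {X : Type*} (F : MeasurableSpace X) [Group G] [MulAction G X] :
    Prop :=
  ∀ (g : G) (A : Set X), MeasurableSet[F] A → MeasurableSet[F] ((fun x => g • x) ⁻¹' A)

/-- `F` is countably generated. -/
def CountablyGen {X : Type*} (F : MeasurableSpace X) : Prop :=
  ∃ S : Set (Set X), S.Countable ∧ F = MeasurableSpace.generateFrom S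

/-- `π` is an ergodic decomposition map for `μ`. -/
def IsErgDecomp (G : Type*) {X : Type*} [Group G] [MulAction G X] [MeasurableSpace X]
    (μ : Measure X) (π : X → Measure X) : Prop :=
  Measurable π ∧
  (∀ x, IsProbabilityMeasure (π x) ∧ IsPmp G (π x) ∧ IsErgodicInv G (π x)) ∧
  (∀ (g : G) (x : X), π (g • x) = π x) ∧
  (∀ ν : Measure X, IsProbabilityMeasure ν → IsPmp G ν → IsErgodicInv G ν →
      ν {x | π x = ν} = 1) ∧
  (∀ B : Set X, MeasurableSet B → μ B = ∫⁻ x, π x B ∂μ)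

/-- The left-shift action of `G` on `L^G = (G → L)`: `(g • x) h = x (g⁻¹ * h)`. -/
instance shiftMulAction {G L : Type*} [Group G] : MulAction G (G → L) where
  smul g x := fun h => x (g⁻¹ * h)
  one_smul x := by funext h; show x (1⁻¹ * h) = x h; simp
  mul_smul g g' x := by
    funext h; show x ((g * g')⁻¹ * h) = x (g'⁻¹ * (g⁻¹ * h)); simp [mul_assoc]

/-!
Peel a clopen neighbourhood `V` of `P` inside `U` by repeated erosion along a finite symmetric
generating set; the eroded sets stay clopen and still contain the invariant set `P`. Among many
disjoint pairs of consecutive layers, one pair has small measure, so the partition into these two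
layers and the rest has small Shannon entropy, and conditioning does not increase it. The number of
erosions needed depends only on `ε`, so one set serves all measures at once.

Let `W` be the eroded set whose boundary separates the two layers. The layers tell in which
direction each generator carries a point across that boundary. The differences
`1_W (g • x) - 1_W x` form a cocycle in `g`, so they are then known for every `g`. This
determines `W` except on the points whose whole orbit stays in `W` or avoids it, and the former make
up an invariant set. Deeper erosions of `V` are erosions of `W`.
-/

section Entropy

variable {X : Type*} {m : MeasurableSpace X} [mX : MeasurableSpace X] {μ : Measure X}
  [IsProbabilityMeasure μ]

theorem lintegral_negMulLog_condExp_indicator_le (hm : m ≤ mX) {A : Set X}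
    (hA : MeasurableSet A) :
    ∫⁻ x, ENNReal.ofReal (Real.negMulLog ((μ[A.indicator (fun _ => (1 : ℝ)) | m]) x)) ∂μ ≤
      ENNReal.ofReal (Real.negMulLog (μ.real A)) := by
  set p : X → ℝ := μ[A.indicator (fun _ => (1 : ℝ)) | m]
  have hp_mem : ∀ᵐ x ∂μ, p x ∈ Icc (0 : ℝ) 1 :=
    (convex_Icc 0 1).condExp_mem hm ((integrable_const 1).indicator hA) isClosed_Icc <|
      ae_of_all μ fun x => by by_cases hx : x ∈ A <;> simp [hx]
  have hp_int : ∫ x, p x ∂μ = μ.real A := by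
    rw [integral_condExp hm, integral_indicator_const _ hA, smul_eq_mul, mul_one]
  have h_nonneg : 0 ≤ᵐ[μ] fun x => Real.negMulLog (p x) :=
    hp_mem.mono fun x hx => Real.negMulLog_nonneg hx.1 hx.2
  have h_integrable : Integrable (fun x => Real.negMulLog (p x)) μ := by
    refine .of_bound (Real.continuous_negMulLog.comp_aestronglyMeasurable
      integrable_condExp.aestronglyMeasurable) 1 ?_
    filter_upwards [hp_mem, h_nonneg] with x hx h0
    rw [Real.norm_of_nonneg h0]
    linarith [Real.negMulLog_le_one_sub_self hx.1, hx.1]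
  rw [← ofReal_integral_eq_lintegral_ofReal h_integrable h_nonneg, ← hp_int]
  exact ENNReal.ofReal_le_ofReal <| Real.concaveOn_negMulLog.le_map_integral
    Real.continuous_negMulLog.continuousOn isClosed_Ici (hp_mem.mono fun x hx => hx.1)
    integrable_condExp h_integrable

theorem condEnt_le_shEnt (hm : m ≤ mX) {ι : Type*} [Countable ι] {α : ι → Set X}
    (hα : ∀ i, MeasurableSet (α i)) : condEnt m μ α ≤ shEnt μ α := by
  rw [condEnt, lintegral_tsum fun i => (Real.continuous_negMulLog.comp_aestronglyMeasurable
    integrable_condExp.aestronglyMeasurable).aemeasurable.ennreal_ofReal]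
  exact ENNReal.tsum_le_tsum fun i => lintegral_negMulLog_condExp_indicator_le hm (hα i)

/-- The partition of `X` into `A`, `B` and the rest, for disjoint `A` and `B`; the remaining
cells of the `ℕ`-indexed family are empty. -/
def partitionOfPair {X : Type*} (A B : Set X) : ℕ → Set X
  | 0 => (A ∪ B)ᶜ
  | 1 => A
  | 2 => B
  | _ => ∅

theorem isPartition_partitionOfPair {A B : Set X} (hA : MeasurableSet A) (hB : MeasurableSet B)
    (hAB : Disjoint A B) : IsPartition (partitionOfPair A B) := by
  refine ⟨?_, ?_, ?_⟩
  · rintro (_ | _ | _ | _)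
    exacts [(hA.union hB).compl, hA, hB, .empty]
  · rw [Set.disjoint_left] at hAB
    rintro (_ | _ | _ | i) (_ | _ | _ | j) hij <;> rw [onFun, Set.disjoint_left] <;>
      simp_all [partitionOfPair, imp_not_comm]
  · refine eq_univ_of_forall fun x => mem_iUnion.2 ?_
    by_cases hxA : x ∈ A
    · exact ⟨1, hxA⟩
    by_cases hxB : x ∈ B
    · exact ⟨2, hxB⟩
    · exact ⟨0, fun hx => hx.elim hxA hxB⟩

theorem shEnt_partitionOfPair {A B : Set X} (hA : MeasurableSet A) (hB : MeasurableSet B)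
    (hAB : Disjoint A B) :
    shEnt μ (partitionOfPair A B) = ENNReal.ofReal
      (Real.negMulLog (1 - (μ.real A + μ.real B)) + Real.negMulLog (μ.real A) +
        Real.negMulLog (μ.real B)) := by
  have negMulLog_nonneg (s : Set X) : 0 ≤ Real.negMulLog (μ.real s) :=
    Real.negMulLog_nonneg measureReal_nonneg measureReal_le_one
  have h_tail : ∀ i ∉ Finset.range 3,
      ENNReal.ofReal (Real.negMulLog (μ (partitionOfPair A B i)).toReal) = 0 := by
    rintro (_ | _ | _ | _) hi <;> simp_all [partitionOfPair]
  rw [← measureReal_union hAB hB, ← probReal_compl_eq_one_sub (hA.union hB),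
    ENNReal.ofReal_add (add_nonneg (negMulLog_nonneg _) (negMulLog_nonneg _)) (negMulLog_nonneg _),
    ENNReal.ofReal_add (negMulLog_nonneg _) (negMulLog_nonneg _), shEnt, tsum_eq_sum h_tail,
    Finset.sum_range_succ, Finset.sum_range_succ, Finset.sum_range_one]
  rfl

theorem exists_forall_shEnt_partitionOfPair_lt (X : Type*) [MeasurableSpace X] {ε : ℝ}
    (hε : 0 < ε) :
    ∃ δ > 0, ∀ (μ : Measure X) [IsProbabilityMeasure μ] (A B : Set X), MeasurableSet A →
      MeasurableSet B → Disjoint A B → μ.real (A ∪ B) < δ →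
        shEnt μ (partitionOfPair A B) < ENNReal.ofReal ε := by
  let H : ℝ × ℝ → ℝ := fun p =>
    Real.negMulLog (1 - (p.1 + p.2)) + Real.negMulLog p.1 + Real.negMulLog p.2
  have hH : Continuous H := by fun_prop
  have hH0 : H (0, 0) < ε := by simpa [H] using hε
  obtain ⟨δ, hδ, hHδ⟩ := Metric.eventually_nhds_iff.1 (hH.continuousAt.eventually_lt_const hH0)
  refine ⟨δ, hδ, fun μ _ A B hA hB hAB hμ => ?_⟩
  have hdist : dist (μ.real A, μ.real B) (0, 0) < δ := by
    simp only [Prod.dist_eq, dist_zero_right, Real.norm_of_nonneg measureReal_nonneg]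
    exact max_lt ((measureReal_mono subset_union_left).trans_lt hμ)
      ((measureReal_mono subset_union_right).trans_lt hμ)
  rw [shEnt_partitionOfPair hA hB hAB]
  exact (ENNReal.ofReal_lt_ofReal_iff hε).2 (hHδ hdist)

end Entropy

theorem exists_measureReal_sdiff_succ_lt {X : Type*} [MeasurableSpace X] {μ : Measure X}
    [IsFiniteMeasure μ] {V : ℕ → Set X} (hV : ∀ n, MeasurableSet (V n)) (hanti : Antitone V)
    {N : ℕ} {δ : ℝ} (hδ : μ.real (V 0) < N * δ) : ∃ i < N, μ.real (V i \ V (i + 1)) < δ := by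
  have hsum : ∑ i ∈ Finset.range N, μ.real (V i \ V (i + 1)) < ∑ _i ∈ Finset.range N, δ := by
    calc ∑ i ∈ Finset.range N, μ.real (V i \ V (i + 1))
        = ∑ i ∈ Finset.range N, (μ.real (V i) - μ.real (V (i + 1))) :=
          Finset.sum_congr rfl fun i _ => measureReal_sdiff (hanti i.le_succ) (hV _)
      _ = μ.real (V 0) - μ.real (V N) := Finset.sum_range_sub' (fun i => μ.real (V i)) N
      _ ≤ μ.real (V 0) := sub_le_self _ measureReal_nonneg
      _ < N * δ := hδ
      _ = ∑ _i ∈ Finset.range N, δ := by simp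
  simpa only [Finset.mem_range] using Finset.exists_lt_of_sum_lt hsum

section InvariantSigmaAlgebra

variable {G X : Type*} [Group G] [MulAction G X] {F F₁ F₂ : MeasurableSpace X}

theorem InvariantAlg.measurable_smul (hF : InvariantAlg G F) (g : G) :
    Measurable[F, F] fun x : X => g • x :=
  fun A hA => hF g A hA

theorem invariantAlg_of_measurableConstSMul [mX : MeasurableSpace X] [MeasurableConstSMul G X] :
    InvariantAlg G mX :=
  fun g _ hA => measurable_const_smul g hA

theorem invariantAlg_sigmaG (ξ : Set (Set X)) : InvariantAlg G (sigmaG G ξ) := by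
  intro g
  refine @measurable_generateFrom _ _ (sigmaG G ξ) _ _ ?_
  rintro _ ⟨h, C, hC, rfl⟩
  exact MeasurableSpace.measurableSet_generateFrom
    ⟨h * g, C, hC, Set.ext fun x => by simp only [mem_preimage, mul_smul]⟩

theorem measurableSet_sigmaG_of_mem {ξ : Set (Set X)} {A : Set X} (hA : A ∈ ξ) :
    MeasurableSet[sigmaG G ξ] A :=
  MeasurableSpace.measurableSet_generateFrom ⟨1, A, hA, by simp only [one_smul, preimage_id']⟩

theorem invariantAlg_invSigma [MeasurableSpace X] : InvariantAlg G (invSigma G X) := by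
  intro g
  refine @measurable_generateFrom _ _ (invSigma G X) _ _ ?_
  rintro A hA
  rw [hA.2 g]
  exact MeasurableSpace.measurableSet_generateFrom hA

theorem invSigma_le [mX : MeasurableSpace X] : invSigma G X ≤ mX :=
  MeasurableSpace.generateFrom_le fun _ hA => hA.1

theorem measurableSet_invSigma_iInter_preimage_smul [MeasurableSpace X] [Countable G]
    [MeasurableConstSMul G X] {W : Set X} (hW : MeasurableSet W) :
    MeasurableSet[invSigma G X] (⋂ g : G, (fun x => g • x) ⁻¹' W) := by
  refine MeasurableSpace.measurableSet_generateFrom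
    ⟨.iInter fun g => measurable_const_smul g hW, fun h => ?_⟩
  ext x
  simp only [mem_preimage, mem_iInter, smul_smul]
  exact (Equiv.mulRight h).forall_congr_left.trans (by simp)

theorem InvariantAlg.sup (h₁ : InvariantAlg G F₁) (h₂ : InvariantAlg G F₂) :
    InvariantAlg G (F₁ ⊔ F₂) := by
  intro g
  have hle : F₁ ⊔ F₂ ≤ (F₁ ⊔ F₂).map fun x => g • x :=
    sup_le (fun A hA => le_sup_left (a := F₁) _ (h₁ g A hA))
      fun A hA => le_sup_right (a := F₁) _ (h₂ g A hA)
  exact hle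

/-- The group elements `g` for which the coboundary `x ↦ f (g • x) - f x` of `f` is
`F`-measurable, although `f` itself need not be. By the cocycle identity they form a subgroup, so
measurability needs checking only on generators. -/
def InvariantAlg.coboundarySubgroup (hF : InvariantAlg G F) (f : X → ℤ) : Subgroup G where
  carrier := {g | Measurable[F] fun x => f (g • x) - f x}
  one_mem' := by simp
  mul_mem' {g h} hg hh := by
    have hsum := (hg.comp (hF.measurable_smul h)).add hh
    simpa [Function.comp_def, Pi.add_def, mul_smul] using hsum
  inv_mem' {g} hg := by
    have hneg := (hg.comp (hF.measurable_smul g⁻¹)).neg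
    simpa [Function.comp_def, Pi.neg_def] using hneg

theorem measurable_indicator_comp_sub_indicator_iff {T : X → X} {W : Set X} :
    Measurable[F] (fun x => W.indicator (1 : X → ℤ) (T x) - W.indicator 1 x) ↔
      MeasurableSet[F] (T ⁻¹' W \ W) ∧ MeasurableSet[F] (W \ T ⁻¹' W) := by
  constructor
  · intro h
    have henter : T ⁻¹' W \ W = {x | W.indicator (1 : X → ℤ) (T x) - W.indicator 1 x = 1} := by
      ext x
      by_cases hx : x ∈ W <;> by_cases hTx : T x ∈ W <;> simp [hx, hTx]
    have hleave : W \ T ⁻¹' W = {x | W.indicator (1 : X → ℤ) (T x) - W.indicator 1 x = -1} := by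
      ext x
      by_cases hx : x ∈ W <;> by_cases hTx : T x ∈ W <;> simp [hx, hTx]
    rw [henter, hleave]
    exact ⟨h (measurableSet_singleton 1), h (measurableSet_singleton (-1))⟩
  · rintro ⟨henter, hleave⟩
    have hdiff : (fun x => W.indicator (1 : X → ℤ) (T x) - W.indicator 1 x) =
        (T ⁻¹' W \ W).indicator 1 - (W \ T ⁻¹' W).indicator 1 := by
      ext x
      by_cases hx : x ∈ W <;> by_cases hTx : T x ∈ W <;> simp [hx, hTx]
    rw [hdiff]
    exact (measurable_one.indicator henter).sub (measurable_one.indicator hleave)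

theorem InvariantAlg.measurableSet_of_crossings [MeasurableSpace X] [Countable G]
    [MeasurableConstSMul G X] (hF : InvariantAlg G F) (hinv : invSigma G X ≤ F) {S : Set G}
    (hS : Subgroup.closure S = ⊤) {W : Set X} (hW : MeasurableSet W)
    (hWS : ∀ s ∈ S, MeasurableSet[F] ((fun x => s • x) ⁻¹' W \ W) ∧
      MeasurableSet[F] (W \ (fun x => s • x) ⁻¹' W)) :
    MeasurableSet[F] W := by
  have hcrossings (g : G) : MeasurableSet[F] ((fun x => g • x) ⁻¹' W \ W) ∧
      MeasurableSet[F] (W \ (fun x => g • x) ⁻¹' W) :=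
    measurable_indicator_comp_sub_indicator_iff.1 <|
      (Subgroup.closure_le (hF.coboundarySubgroup (W.indicator 1))).2
        (fun s hs => measurable_indicator_comp_sub_indicator_iff.2 (hWS s hs))
        (hS ▸ Subgroup.mem_top g)
  have hdecomp : W = (⋃ g : G, W \ (fun x => g • x) ⁻¹' W) ∪ ⋂ g : G, (fun x => g • x) ⁻¹' W := by
    rw [← sdiff_iInter, sdiff_union_of_subset]
    exact fun x hx => by simpa only [one_smul, preimage_id'] using mem_iInter.1 hx 1
  rw [hdecomp]
  exact .union (.iUnion fun g => (hcrossings g).2)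
    (hinv _ (measurableSet_invSigma_iInter_preimage_smul hW))

end InvariantSigmaAlgebra

section Erosion

variable {G X : Type*} [Group G] [MulAction G X] {S : Set G} {F : MeasurableSpace X}

/-- The erosion of `V` by `S`: the points of `V` that every element of `S` keeps in `V`.
Iterating it peels off the successive layers of `V` in the Schreier graph of `S`. -/
def erosion (S : Set G) (V : Set X) : Set X :=
  V ∩ ⋂ s ∈ S, (fun x => s • x) ⁻¹' V

theorem mem_erosion {V : Set X} {x : X} : x ∈ erosion S V ↔ x ∈ V ∧ ∀ s ∈ S, s • x ∈ V := by
  simp [erosion]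

theorem antitone_iterate_erosion (S : Set G) (V : Set X) :
    Antitone fun n => (erosion S)^[n] V :=
  fun _ _ hmn => antitone_iterate_of_le_id (fun _ => inter_subset_left) hmn V

theorem subset_iterate_erosion {P V : Set X} (hP : ∀ g : G, (fun x => g • x) ⁻¹' P = P)
    (hPV : P ⊆ V) (n : ℕ) : P ⊆ (erosion S)^[n] V :=
  Iterate.rec (P ⊆ ·) hPV
    (fun _ h => subset_inter h (subset_iInter₂ fun s _ => (hP s).ge.trans (preimage_mono h))) n

theorem isClopen_iterate_erosion [TopologicalSpace X] [ContinuousConstSMul G X] (hS : S.Finite)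
    {V : Set X} (hV : IsClopen V) (n : ℕ) : IsClopen ((erosion S)^[n] V) :=
  Iterate.rec IsClopen hV (fun _ h =>
    h.inter (hS.isClopen_biInter fun s _ => h.preimage (continuous_const_smul s))) n

theorem InvariantAlg.measurableSet_iterate_erosion (hF : InvariantAlg G F) (hS : S.Countable)
    {V : Set X} (hV : MeasurableSet[F] V) (n : ℕ) :
    MeasurableSet[F] ((erosion S)^[n] V) :=
  Iterate.rec (MeasurableSet[F] ·) hV (fun _ h =>
    h.inter (.biInter hS fun s _ => hF s _ h)) n

theorem erosion_sdiff_preimage_smul (V : Set X) {s : G} (hs : s ∈ S) :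
    erosion S V \ (fun x => s • x) ⁻¹' erosion S V =
      (erosion S V \ erosion S (erosion S V)) ∩
        (fun x => s • x) ⁻¹' (V \ erosion S V) := by
  ext x
  simp only [mem_sdiff, mem_inter_iff, mem_preimage]
  constructor
  · rintro ⟨hx, hsx⟩
    exact ⟨⟨hx, fun h => hsx ((mem_erosion.1 h).2 s hs)⟩, (mem_erosion.1 hx).2 s hs, hsx⟩
  · exact fun h => ⟨h.1.1, h.2.2⟩

theorem preimage_smul_erosion_sdiff (hSinv : ∀ s ∈ S, s⁻¹ ∈ S) (V : Set X) {s : G} (hs : s ∈ S) :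
    (fun x => s • x) ⁻¹' erosion S V \ erosion S V =
      (fun x => s • x) ⁻¹' (erosion S V \ erosion S (erosion S V)) ∩ (V \ erosion S V) := by
  ext x
  simp only [mem_sdiff, mem_inter_iff, mem_preimage]
  constructor
  · rintro ⟨hsx, hx⟩
    have hback {Y : Set X} (h : s • x ∈ erosion S Y) : x ∈ Y := by
      simpa using (mem_erosion.1 h).2 s⁻¹ (hSinv s hs)
    exact ⟨⟨hsx, fun h => hx (hback h)⟩, hback hsx, hx⟩
  · exact fun h => ⟨h.1.1, h.2.2⟩

theorem InvariantAlg.measurableSet_erosion_of_layers [MeasurableSpace X] [Countable G]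
    [MeasurableConstSMul G X] (hF : InvariantAlg G F) (hinv : invSigma G X ≤ F)
    (hSinv : ∀ s ∈ S, s⁻¹ ∈ S) (hSgen : Subgroup.closure S = ⊤)
    {V : Set X} (hV : MeasurableSet (erosion S V)) (houter : MeasurableSet[F] (V \ erosion S V))
    (hinner : MeasurableSet[F] (erosion S V \ erosion S (erosion S V))) :
    MeasurableSet[F] (erosion S V) := by
  refine hF.measurableSet_of_crossings hinv hSgen hV fun s hs => ?_
  rw [preimage_smul_erosion_sdiff hSinv V hs, erosion_sdiff_preimage_smul V hs]
  exact ⟨.inter (hF s _ hinner) houter, .inter hinner (hF s _ houter)⟩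

theorem InvariantAlg.measurableSet_iterate_erosion_of_layers [MeasurableSpace X] [Countable G]
    [MeasurableConstSMul G X] (hF : InvariantAlg G F) (hinv : invSigma G X ≤ F)
    (hSinv : ∀ s ∈ S, s⁻¹ ∈ S) (hSgen : Subgroup.closure S = ⊤) {V : Set X}
    (hV : MeasurableSet V) {j n : ℕ} (hjn : j < n)
    (houter : MeasurableSet[F] ((erosion S)^[j] V \ (erosion S)^[j + 1] V))
    (hinner : MeasurableSet[F] ((erosion S)^[j + 1] V \ (erosion S)^[j + 2] V)) :
    MeasurableSet[F] ((erosion S)^[n] V) := by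
  have hV' : MeasurableSet ((erosion S)^[j + 1] V) :=
    invariantAlg_of_measurableConstSMul.measurableSet_iterate_erosion S.to_countable hV (j + 1)
  have hbase : MeasurableSet[F] ((erosion S)^[j + 1] V) := by
    simp only [iterate_succ_apply'] at hV' houter hinner ⊢
    exact hF.measurableSet_erosion_of_layers hinv hSinv hSgen hV' houter hinner
  obtain ⟨k, rfl⟩ := Nat.exists_eq_add_of_le' hjn
  rw [iterate_add_apply]
  exact hF.measurableSet_iterate_erosion S.to_countable hbase k

end Erosion

section OuterRokhlin

variable {G X : Type*} [Group G] [MulAction G X] {F : MeasurableSpace X}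
  [mX : MeasurableSpace X] {S : Set G} {μ : Measure X} [IsProbabilityMeasure μ]

theorem outerRokhlin_le_shEnt (hF : F ≤ mX) {ξ : Set (Set X)} {α : ℕ → Set X}
    (hα : IsPartition α)
    (hξ : ∀ A ∈ ξ, MeasurableSet[sigmaG G (range α) ⊔ invSigma G X] A) :
    outerRokhlin G ξ F μ ≤ shEnt μ α := by
  have hle : sigmaG G (range α) ⊔ invSigma G X ≤ sigmaG G (range α) ⊔ F ⊔ invSigma G X :=
    sup_le_sup_right le_sup_left _
  calc outerRokhlin G ξ F μ
      ≤ condEnt (F ⊔ invSigma G X) μ α :=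
        sInf_le ⟨α, hα, fun A hA => ⟨A, hle _ (hξ A hA), by simp⟩, rfl⟩
    _ ≤ shEnt μ α := condEnt_le_shEnt (sup_le hF invSigma_le) hα.1

theorem outerRokhlin_iterate_erosion_le [Countable G] [MeasurableConstSMul G X] (hF : F ≤ mX)
    (hSinv : ∀ s ∈ S, s⁻¹ ∈ S) (hSgen : Subgroup.closure S = ⊤) {V : Set X}
    (hV : MeasurableSet V) {j n : ℕ} (hjn : j < n) :
    outerRokhlin G {(erosion S)^[n] V} F μ ≤
      shEnt μ (partitionOfPair ((erosion S)^[j + 1] V \ (erosion S)^[j + 2] V)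
        ((erosion S)^[j] V \ (erosion S)^[j + 1] V)) := by
  have hmeas (k : ℕ) : MeasurableSet ((erosion S)^[k] V) :=
    invariantAlg_of_measurableConstSMul.measurableSet_iterate_erosion S.to_countable hV k
  refine outerRokhlin_le_shEnt hF (isPartition_partitionOfPair ((hmeas _).diff (hmeas _))
    ((hmeas _).diff (hmeas _)) (disjoint_sdiff_right.mono_left sdiff_le)) ?_
  rintro _ rfl
  have hcell (α : ℕ → Set X) (i : ℕ) : MeasurableSet[sigmaG G (range α) ⊔ invSigma G X] (α i) :=
    le_sup_left (a := sigmaG G (range α)) _ (measurableSet_sigmaG_of_mem (mem_range_self i))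
  exact ((invariantAlg_sigmaG _).sup invariantAlg_invSigma).measurableSet_iterate_erosion_of_layers
    le_sup_right hSinv hSgen hV hjn (hcell (partitionOfPair _ _) 2) (hcell (partitionOfPair _ _) 1)

theorem exists_forall_outerRokhlin_iterate_erosion_lt [Countable G] [MeasurableConstSMul G X]
    (hF : F ≤ mX) (hSinv : ∀ s ∈ S, s⁻¹ ∈ S) (hSgen : Subgroup.closure S = ⊤) {ε : ℝ}
    (hε : 0 < ε) :
    ∃ n, ∀ (V : Set X) (μ : Measure X) [IsProbabilityMeasure μ], MeasurableSet V →
      outerRokhlin G {(erosion S)^[n] V} F μ < ENNReal.ofReal ε := by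
  obtain ⟨δ, hδ, hent⟩ := exists_forall_shEnt_partitionOfPair_lt X hε
  obtain ⟨N, hN⟩ := exists_nat_gt (1 / δ)
  refine ⟨2 * N, fun V μ _ hV => ?_⟩
  let E (k : ℕ) : Set X := (erosion S)^[k] V
  have hE (k : ℕ) : MeasurableSet (E k) :=
    invariantAlg_of_measurableConstSMul.measurableSet_iterate_erosion S.to_countable hV k
  have hanti : Antitone E := antitone_iterate_erosion S V
  obtain ⟨i, hiN, hi⟩ : ∃ i < N, μ.real (E (2 * i) \ E (2 * i + 2)) < δ :=
    exists_measureReal_sdiff_succ_lt (fun k => hE (2 * k))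
      (hanti.comp_monotone fun _ _ h => Nat.mul_le_mul_left 2 h)
      (measureReal_le_one.trans_lt ((div_lt_iff₀ hδ).1 hN))
  have hring : (E (2 * i + 1) \ E (2 * i + 2)) ∪ (E (2 * i) \ E (2 * i + 1)) =
      E (2 * i) \ E (2 * i + 2) := by
    rw [union_comm]
    exact sdiff_sup_sdiff_cancel (hanti (Nat.le_succ _)) (hanti (Nat.le_succ _))
  refine (outerRokhlin_iterate_erosion_le hF hSinv hSgen hV (j := 2 * i) (by lia)).trans_lt
    (hent μ _ _ ((hE _).diff (hE _)) ((hE _).diff (hE _))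
      (disjoint_sdiff_right.mono_left sdiff_le) ?_)
  rwa [← hring] at hi

end OuterRokhlin

theorem countable_of_fg (G : Type*) [Group G] [Group.FG G] : Countable G := by
  obtain ⟨α, hα, φ, hφ⟩ := Group.fg_iff_exists_freeGroup_hom_surjective_finite.1 ‹Group.FG G›
  exact hφ.countable

theorem exists_finite_symmetric_closure_eq_top (G : Type*) [Group G] [Group.FG G] :
    ∃ S : Set G, S.Finite ∧ (∀ s ∈ S, s⁻¹ ∈ S) ∧ Subgroup.closure S = ⊤ := by
  obtain ⟨T, hT, hTfin⟩ := Group.fg_iff.1 ‹Group.FG G›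
  refine ⟨T ∪ T⁻¹, hTfin.union hTfin.inv, fun s hs => ?_, ?_⟩
  · simpa [or_comm] using hs
  · rw [Subgroup.closure_union, Subgroup.closure_inv, sup_idem, hT]

theorem exists_isClopen_of_isCompact_subset_isOpen {X : Type*} [TopologicalSpace X]
    (hX : TopologicalSpace.IsTopologicalBasis {s : Set X | IsClopen s}) {K U : Set X}
    (hK : IsCompact K) (hU : IsOpen U) (hKU : K ⊆ U) :
    ∃ V, IsClopen V ∧ K ⊆ V ∧ V ⊆ U := by
  suffices h : ∃ V, IsClopen V ∧ V ⊆ U ∧ K ⊆ V by tauto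
  refine hK.induction_on ⟨∅, isClopen_empty, empty_subset U, subset_rfl⟩ ?_ ?_ ?_
  · rintro s t hst ⟨V, hV, hVU, htV⟩
    exact ⟨V, hV, hVU, hst.trans htV⟩
  · rintro s t ⟨V, hV, hVU, hsV⟩ ⟨W, hW, hWU, htW⟩
    exact ⟨V ∪ W, hV.union hW, union_subset hVU hWU, union_subset_union hsV htW⟩
  · intro x hx
    obtain ⟨V, hV, hxV, hVU⟩ := hX.mem_nhds_iff.1 (hU.mem_nhds (hKU hx))
    exact ⟨V, mem_nhdsWithin_of_mem_nhds (hV.isOpen.mem_nhds hxV), V, hV, hVU, subset_rfl⟩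

theorem statement13_general {G X : Type*} [Group G] [Group.FG G] [MulAction G X]
    {F : MeasurableSpace X} [TopologicalSpace X] [ContinuousConstSMul G X]
    [mX : MeasurableSpace X] [BorelSpace X] (hF : F ≤ mX)
    (hX : TopologicalSpace.IsTopologicalBasis {s : Set X | IsClopen s})
    {P : Set X} (hP : IsCompact P) (hPinv : ∀ g : G, (fun x => g • x) ⁻¹' P = P)
    {ε : ℝ} (hε : 0 < ε) {U : Set X} (hU : IsOpen U) (hPU : P ⊆ U) :
    ∃ V : Set X, IsClopen V ∧ P ⊆ V ∧ V ⊆ U ∧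
      ∀ (μ : Measure X) [IsProbabilityMeasure μ],
        outerRokhlin G {V} F μ < ENNReal.ofReal ε := by
  have := countable_of_fg G
  obtain ⟨S, hSfin, hSinv, hSgen⟩ := exists_finite_symmetric_closure_eq_top G
  obtain ⟨V, hV, hPV, hVU⟩ := exists_isClopen_of_isCompact_subset_isOpen hX hP hU hPU
  obtain ⟨n, hn⟩ := exists_forall_outerRokhlin_iterate_erosion_lt hF hSinv hSgen hε
  exact ⟨(erosion S)^[n] V, isClopen_iterate_erosion hSfin hV n,
    subset_iterate_erosion hPinv hPV n, (antitone_iterate_erosion S V n.zero_le).trans hVU,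
    fun μ _ => hn V μ hV.isOpen.measurableSet⟩

instance continuousConstSMul_shift {G L : Type*} [Group G] [TopologicalSpace L] :
    ContinuousConstSMul G (G → L) where
  continuous_const_smul g := continuous_pi fun h => continuous_apply (g⁻¹ * h)

/-- Lemma 5.5: for a finitely generated infinite group and a finite
`G`-invariant set `P ⊆ L^G`, every open neighborhood of `P` contains a clopen
neighborhood `V` of `P` whose outer Rokhlin entropy is less than `ε` for every invariant
Borel probability measure. -/
theorem statement13 {G L : Type*} [Group G] [Infinite G] [Group.FG G]
    [Fintype L] [TopologicalSpace L] [DiscreteTopology L]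
    [mGL : MeasurableSpace (G → L)] [BorelSpace (G → L)]
    (P : Set (G → L)) (hPfin : P.Finite)
    (hPinv : ∀ g : G, (fun x : G → L => g • x) ⁻¹' P = P)
    (ε : ℝ) (hε : 0 < ε) (U : Set (G → L)) (hU : IsOpen U) (hPU : P ⊆ U) :
    ∃ V : Set (G → L), IsClopen V ∧ P ⊆ V ∧ V ⊆ U ∧
      ∀ μ : Measure (G → L), IsProbabilityMeasure μ → IsPmp G μ →
        outerRokhlin G {V} ⊥ μ < ENNReal.ofReal ε :=
  have ⟨V, hV, hPV, hVU, hent⟩ := statement13_general bot_le isTopologicalBasis_isClopen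
    hPfin.isCompact hPinv hε hU hPU
  ⟨V, hV, hPV, hVU, fun μ _ _ => hent μ⟩
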